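/- Let X be a strictly stable random variable with parameters (ν, θ, τ). Then E[(log|X|)⁶] = τ⁶ + 15τ⁴·DV + 40τ³·ζ(3)(ν^{3/2} − 1) + 45τ²·DV² + 15·DV³ + 15τ²·π⁴((1 − θ⁴)/8 + (ν² − 1)/15) + 120τ·ζ(3)(ν^{3/2} − 1)·DV + 40ζ(3)²(ν^{3/2} − 1)² + 144τ·ζ(5)(ν^{5/2} − 1) + 15π⁴((1 − θ⁴)/8 + (ν² − 1)/15)·DV + 8π⁶((1 − θ⁶)/32 + (ν³ − 1)/63). -/

import Mathlib

open MeasureTheory ProbabilityTheory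

/-- The real value of the Riemann zeta function at a real argument. -/
noncomputable def zetaR (s : ℝ) : ℝ := (riemannZeta (s : ℂ)).re

/-- A real random variable `X` is strictly stable with parameters `(ν, θ, τ)` if
`ν ≥ 1/4`, `|θ| ≤ min 1 (2√ν − 1)`, `P(X = 0) = 0`, `log |X|` has finite absolute
moments of every order, and the characteristic function of `X` is
`E[exp(i k X)] = exp(−exp(ν^{−1/2}(log|k| + τ − i(π/2)θ sign k) + C(ν^{−1/2} − 1)))`
for all real `k ≠ 0`, where `C` is the Euler–Mascheroni constant. -/
def IsStrictlyStable {Ω : Type*} [MeasureSpace Ω] (X : Ω → ℝ) (ν θ τ : ℝ) : Prop :=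
  Measurable X ∧ (1/4 : ℝ) ≤ ν ∧ |θ| ≤ min 1 (2 * Real.sqrt ν - 1) ∧
  (ℙ : Measure Ω) {ω | X ω = 0} = 0 ∧
  (∀ p : ℕ, Integrable (fun ω => (abs (Real.log (abs (X ω)))) ^ p)) ∧
  ∀ k : ℝ, k ≠ 0 →
    (∫ ω, Complex.exp (Complex.I * (k : ℂ) * (X ω : ℂ))) =
      Complex.exp (-Complex.exp
        (((ν ^ (-(1/2) : ℝ) : ℝ) : ℂ) *
            (((Real.log |k| : ℝ) : ℂ) + (τ : ℂ) -
              Complex.I * ((Real.pi / 2 : ℝ) : ℂ) * (θ : ℂ) * ((Real.sign k : ℝ) : ℂ)) +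
          ((Real.eulerMascheroniConstant : ℝ) : ℂ) * (((ν ^ (-(1/2) : ℝ) : ℝ) : ℂ) - 1)))

/-!
For `-1 < t < 0` the moment `E |X| ^ t` can be read off from the Mellin transform of the
characteristic function. The Mellin integral of `exp (i k x)` in `k` converges only conditionally,
so it has to be regularised by Abel summation before the integrals are exchanged; Fatou's lemma then
supplies the integrability of `|X| ^ t`. The result is a ratio of Gamma functions and cosines. Its
logarithm is analytic near `0`, and the expansions of `log Γ` and `log cos` in zeta values give its
Taylor coefficients, which are the cumulants of `log |X|`.

Since all moments of `log |X|` are finite, an identity for its moment generating function on a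
one-sided neighbourhood of `0` already determines them, and the moment-cumulant recursion gives the
sixth one. In the extreme case `|θ| = √ν = 1` the Mellin integral degenerates, but `X` is then
almost surely equal to `θ * exp τ`.
-/

open Filter Set Topology
open scoped Nat

section PowerSeries

variable {c : ℕ → ℝ} {f : ℝ → ℝ}

theorem hasFPowerSeriesAt_ofScalars_zero_of_eventually_hasSum
    (h : ∀ᶠ x in 𝓝 0, HasSum (fun n => c n * x ^ n) (f x)) :
    HasFPowerSeriesAt f (.ofScalars ℝ c) 0 := by
  refine hasFPowerSeriesAt_iff.2 ?_
  simpa [FormalMultilinearSeries.coeff_ofScalars, mul_comm] using h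

theorem iteratedDeriv_zero_of_eventually_hasSum
    (h : ∀ᶠ x in 𝓝 0, HasSum (fun n => c n * x ^ n) (f x)) (n : ℕ) :
    iteratedDeriv n f 0 = n ! * c n := by
  have hc := hasFPowerSeriesAt_ofScalars_zero_of_eventually_hasSum h
  have := congrArg (fun p => p.coeff n)
    (hc.analyticAt.hasFPowerSeriesAt.eq_formalMultilinearSeries hc)
  simp only [FormalMultilinearSeries.coeff_ofScalars] at this
  field_simp at this
  linarith

end PowerSeries

section Cumulants

theorem iteratedDeriv_exp_comp_succ {K : ℝ → ℝ} {x : ℝ} (hK : AnalyticAt ℝ K x) (n : ℕ) :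
    iteratedDeriv (n + 1) (fun t => Real.exp (K t)) x =
      ∑ i ∈ Finset.range (n + 1), n.choose i * iteratedDeriv (i + 1) K x *
        iteratedDeriv (n - i) (fun t => Real.exp (K t)) x := by
  have hexp : AnalyticAt ℝ (fun t => Real.exp (K t)) x := hK.rexp
  have hderiv : deriv (fun t => Real.exp (K t)) =ᶠ[𝓝 x] fun t => deriv K t * Real.exp (K t) := by
    filter_upwards [hK.eventually_analyticAt] with t ht
    rw [deriv_exp ht.differentiableAt, mul_comm]
  rw [iteratedDeriv_succ', hderiv.iteratedDeriv_eq n,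
    iteratedDeriv_fun_mul hK.deriv.contDiffAt hexp.contDiffAt]
  simp only [iteratedDeriv_succ']

theorem sixth_moment_eq_of_recursion {m κ : ℕ → ℝ} (h0 : m 0 = 1)
    (hm : ∀ n, m (n + 1) = ∑ i ∈ Finset.range (n + 1), n.choose i * κ (i + 1) * m (n - i)) :
    m 6 = κ 6 + 6 * κ 5 * κ 1 + 15 * κ 4 * κ 2 + 15 * κ 4 * κ 1 ^ 2 + 10 * κ 3 ^ 2
      + 60 * κ 3 * κ 2 * κ 1 + 20 * κ 3 * κ 1 ^ 3 + 15 * κ 2 ^ 3 + 45 * κ 2 ^ 2 * κ 1 ^ 2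
      + 15 * κ 2 * κ 1 ^ 4 + κ 1 ^ 6 := by
  simp only [hm, h0, Finset.sum_range_succ, Finset.sum_range_zero, Nat.choose, Nat.cast_one,
    Nat.sub_self, Nat.reduceAdd, Nat.reduceSub, Nat.cast_ofNat]
  ring

end Cumulants

section OneSidedMoments

variable {Ω : Type*} {mΩ : MeasurableSpace Ω} {μ : Measure Ω} {Y : Ω → ℝ} {u : ℝ}

theorem Ioo_subset_interior_integrableExpSet [IsFiniteMeasure μ]
    (hu : Integrable (fun ω => Real.exp (u * Y ω)) μ) :
    Ioo u 0 ⊆ interior (integrableExpSet Y μ) :=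
  interior_maximal (fun _ ht => integrable_exp_mul_of_le_of_le hu (by simp) ht.1.le ht.2.le)
    isOpen_Ioo

theorem tendsto_integral_pow_mul_exp_nhdsLT_zero [IsFiniteMeasure μ] (hu0 : u < 0)
    (hu : Integrable (fun ω => Real.exp (u * Y ω)) μ) {n : ℕ}
    (hY : Integrable (fun ω => |Y ω| ^ n) μ) (hYm : AEMeasurable Y μ) :
    Tendsto (fun t => ∫ ω, Y ω ^ n * Real.exp (t * Y ω) ∂μ) (𝓝[<] 0) (𝓝 (∫ ω, Y ω ^ n ∂μ)) := by
  have hdom : Integrable (fun ω => |Y ω| ^ n + |Y ω| ^ n * Real.exp (u / 2 * Y ω)) μ :=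
    hY.add <| integrable_pow_abs_mul_exp_of_mem_interior_integrableExpSet
      (Ioo_subset_interior_integrableExpSet hu ⟨by linarith, by linarith⟩) n
  refine tendsto_integral_filter_of_dominated_convergence _ ?_ ?_ hdom ?_
  · exact .of_forall fun t => by fun_prop
  · filter_upwards [Ioo_mem_nhdsLT (show u / 2 < 0 by linarith)] with t ht
    refine .of_forall fun ω => ?_
    rw [norm_mul, norm_pow, Real.norm_eq_abs, Real.norm_of_nonneg (Real.exp_nonneg _)]
    nth_rw 2 [← mul_one (|Y ω| ^ n)]
    rw [← mul_add]
    gcongr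
    obtain hω | hω := le_total 0 (Y ω)
    · have : Real.exp (t * Y ω) ≤ 1 := Real.exp_le_one_iff.2 (by nlinarith [ht.2])
      linarith [Real.exp_nonneg (u / 2 * Y ω)]
    · have : Real.exp (t * Y ω) ≤ Real.exp (u / 2 * Y ω) :=
        Real.exp_le_exp.2 (by nlinarith [ht.1])
      linarith
  · refine .of_forall fun ω => ?_
    have : Continuous fun t => Y ω ^ n * Real.exp (t * Y ω) := by fun_prop
    simpa using (this.tendsto 0).mono_left nhdsWithin_le_nhds

theorem integral_pow_eq_iteratedDeriv_of_mgf_eqOn_Ioo [IsFiniteMeasure μ] (hu0 : u < 0)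
    (hu : Integrable (fun ω => Real.exp (u * Y ω)) μ) {n : ℕ}
    (hY : Integrable (fun ω => |Y ω| ^ n) μ) (hYm : AEMeasurable Y μ) {G : ℝ → ℝ}
    (hG : AnalyticAt ℝ G 0) (hmgf : EqOn (mgf Y μ) G (Ioo u 0)) :
    ∫ ω, Y ω ^ n ∂μ = iteratedDeriv n G 0 := by
  have hcont : Tendsto (iteratedDeriv n G) (𝓝[<] 0) (𝓝 (iteratedDeriv n G 0)) := by
    rw [iteratedDeriv_eq_iterate]
    exact (hG.iterated_deriv n).continuousAt.tendsto.mono_left nhdsWithin_le_nhds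
  refine tendsto_nhds_unique (tendsto_integral_pow_mul_exp_nhdsLT_zero hu0 hu hY hYm) ?_
  refine hcont.congr' ?_
  filter_upwards [Ioo_mem_nhdsLT hu0] with t ht
  rw [← hmgf.iteratedDeriv_of_isOpen isOpen_Ioo n ht,
    iteratedDeriv_mgf (Ioo_subset_interior_integrableExpSet hu ht)]

end OneSidedMoments

section Zeta

theorem hasSum_zetaR {n : ℕ} (hn : 1 < n) :
    HasSum (fun k : ℕ => 1 / ((k : ℝ) + 1) ^ n) (zetaR n) := by
  have hsum : Summable fun k : ℕ => 1 / ((k : ℝ) + 1) ^ n := by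
    simpa using (summable_nat_add_iff 1).2 (Real.summable_one_div_nat_pow.2 hn)
  have hzeta : riemannZeta n = ((∑' k : ℕ, 1 / ((k : ℝ) + 1) ^ n : ℝ) : ℂ) := by
    rw [zeta_eq_tsum_one_div_nat_add_one_cpow (by simpa using hn), Complex.ofReal_tsum]
    simp
  rw [zetaR, Complex.ofReal_natCast, hzeta, Complex.ofReal_re]
  exact hsum.hasSum

theorem zetaR_two : zetaR 2 = Real.pi ^ 2 / 6 := by
  rw [zetaR, Complex.ofReal_ofNat, riemannZeta_two]
  norm_cast

theorem zetaR_four : zetaR 4 = Real.pi ^ 4 / 90 := by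
  rw [zetaR, Complex.ofReal_ofNat, riemannZeta_four]
  norm_cast

theorem bernoulli_six : bernoulli 6 = 1 / 42 := by
  rw [bernoulli_eq_bernoulli'_of_ne_one (by decide), bernoulli'_def]
  have h5 : bernoulli' 5 = 0 := bernoulli'_eq_zero_of_odd (by decide) (by decide)
  norm_num [Finset.sum_range_succ, Nat.choose, h5]

theorem zetaR_six : zetaR 6 = Real.pi ^ 6 / 945 := by
  have h : riemannZeta 6 = ((Real.pi ^ 6 / 945 : ℝ) : ℂ) := by
    have := riemannZeta_two_mul_nat (k := 3) three_ne_zero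
    norm_num [bernoulli_six, Nat.factorial] at this
    rw [this]
    push_cast
    ring
  rw [zetaR, Complex.ofReal_ofNat, h, Complex.ofReal_re]

end Zeta

section LogGamma

theorem hasSum_neg_log_one_sub_sub_self {y : ℝ} (hy : |y| < 1) :
    HasSum (fun n : ℕ => y ^ (n + 2) / (n + 2)) (-Real.log (1 - y) - y) := by
  have h := (hasSum_nat_add_iff' 1).2 (Real.hasSum_pow_div_log_of_abs_lt_one hy)
  simpa [add_assoc, one_add_one_eq_two] using h

theorem logGammaSeq_one_sub {x : ℝ} (hx : x < 1) (n : ℕ) :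
    Real.BohrMollerup.logGammaSeq (1 - x) n =
      x * (harmonic n - Real.log n) + (Real.log n - Real.log (n + (1 - x))) +
        ∑ k ∈ Finset.range n, (-Real.log (1 - x / (k + 1)) - x / (k + 1)) := by
  have hlog : ∀ k : ℕ, Real.log (1 - x + k) = Real.log (1 - x / (k + 1)) + Real.log (k + 1) := by
    intro k
    have hk : (0 : ℝ) < 1 - x / (k + 1) := by
      rw [sub_pos, div_lt_one (by positivity)]
      linarith [k.cast_nonneg (α := ℝ)]
    rw [← Real.log_mul hk.ne' (by positivity)]
    congr 1
    field_simp
    ring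
  have hfact : Real.log n ! = ∑ k ∈ Finset.range n, Real.log (k + 1) := by
    rw [← Finset.prod_range_add_one_eq_factorial, Nat.cast_prod, Real.log_prod
      (fun k _ => by positivity)]
    simp
  have hharm : (harmonic n : ℝ) = ∑ k ∈ Finset.range n, ((k : ℝ) + 1)⁻¹ := by
    simp [harmonic]
  rw [Real.BohrMollerup.logGammaSeq, Finset.sum_range_succ, hfact, hharm,
    add_comm (n : ℝ)]
  simp only [hlog, Finset.sum_add_distrib, Finset.sum_sub_distrib, Finset.sum_neg_distrib,
    div_eq_mul_inv, ← Finset.mul_sum]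
  ring

theorem hasSum_log_Gamma_one_sub {x : ℝ} (hx : x < 1) :
    HasSum (fun k : ℕ => -Real.log (1 - x / (k + 1)) - x / (k + 1))
      (Real.log (Real.Gamma (1 - x)) - Real.eulerMascheroniConstant * x) := by
  rw [hasSum_iff_tendsto_nat_of_nonneg]
  · have hlog := (Real.tendsto_log_comp_add_sub_log (1 - x)).comp tendsto_natCast_atTop_atTop
    have h := ((Real.BohrMollerup.tendsto_log_gamma (sub_pos.2 hx)).sub
      (Real.tendsto_harmonic_sub_log.const_mul x)).add hlog
    rw [add_zero, mul_comm x] at h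
    refine h.congr fun n => ?_
    rw [logGammaSeq_one_sub hx, Function.comp_apply]
    ring
  · intro k
    have hk : (0 : ℝ) < 1 - x / (k + 1) := by
      rw [sub_pos, div_lt_one (by positivity)]
      linarith [k.cast_nonneg (α := ℝ)]
    linarith [Real.log_le_sub_one_of_pos hk]

theorem hasSum_zetaR_mul_pow {x : ℝ} (hx : |x| < 1) :
    HasSum (fun n : ℕ => zetaR ↑(n + 2) / (n + 2) * x ^ (n + 2))
      (Real.log (Real.Gamma (1 - x)) - Real.eulerMascheroniConstant * x) := by
  have hle (k : ℕ) : |x / (k + 1)| ≤ |x| := by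
    rw [abs_div, abs_of_pos (by positivity : (0 : ℝ) < k + 1)]
    exact div_le_self (abs_nonneg x) (by linarith [k.cast_nonneg (α := ℝ)])
  have hrow (k : ℕ) := hasSum_neg_log_one_sub_sub_self ((hle k).trans_lt hx)
  have hcol (n : ℕ) : HasSum (fun k : ℕ => (x / (k + 1)) ^ (n + 2) / ((n : ℝ) + 2))
      (zetaR ↑(n + 2) / (n + 2) * x ^ (n + 2)) := by
    have hterm (k : ℕ) : (x / (k + 1)) ^ (n + 2) / ((n : ℝ) + 2) =
        x ^ (n + 2) / (n + 2) * (1 / ((k : ℝ) + 1) ^ (n + 2)) := by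
      rw [div_pow]
      field_simp
    simp only [hterm]
    rw [div_mul_comm]
    exact (hasSum_zetaR (Nat.one_lt_succ_succ n)).mul_left _
  have hsum : Summable fun p : ℕ × ℕ => (x / (p.1 + 1)) ^ (p.2 + 2) / ((p.2 : ℝ) + 2) := by
    have hdom : Summable fun p : ℕ × ℕ => 1 / ((p.1 : ℝ) + 1) ^ 2 * |x| ^ p.2 :=
      (hasSum_zetaR one_lt_two).summable.mul_of_nonneg
        (summable_geometric_of_lt_one (abs_nonneg x) hx) (fun _ => by positivity)
        (fun _ => by positivity)
    refine hdom.of_norm_bounded fun p => ?_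
    have hp : |x / (p.1 + 1)| ^ 2 ≤ 1 / ((p.1 : ℝ) + 1) ^ 2 := by
      rw [sq_abs, div_pow]
      gcongr
      exact (sq_lt_one_iff_abs_lt_one x).2 hx |>.le
    calc ‖(x / (p.1 + 1)) ^ (p.2 + 2) / ((p.2 : ℝ) + 2)‖
        = |x / (p.1 + 1)| ^ 2 * |x / (p.1 + 1)| ^ p.2 / ((p.2 : ℝ) + 2) := by
          rw [norm_div, norm_pow, Real.norm_eq_abs, Real.norm_of_nonneg (by positivity)]
          ring
      _ ≤ |x / (p.1 + 1)| ^ 2 * |x / (p.1 + 1)| ^ p.2 :=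
          div_le_self (by positivity) (by linarith [p.2.cast_nonneg (α := ℝ)])
      _ ≤ 1 / ((p.1 : ℝ) + 1) ^ 2 * |x| ^ p.2 :=
          mul_le_mul hp (pow_le_pow_left₀ (abs_nonneg _) (hle p.1) _) (by positivity)
            (by positivity)
  have htotal := hsum.hasSum.prod_fiberwise hrow
  rw [(hasSum_log_Gamma_one_sub (lt_of_abs_lt hx)).unique htotal]
  exact ((Equiv.prodComm ℕ ℕ).hasSum_iff.2 hsum.hasSum).prod_fiberwise hcol

end LogGamma

section LogCos

theorem cos_pi_mul_div_two_pos {x : ℝ} (hx : |x| < 1) : 0 < Real.cos (Real.pi * x / 2) := by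
  have := abs_lt.1 hx
  exact Real.cos_pos_of_mem_Ioo ⟨by nlinarith [Real.pi_pos], by nlinarith [Real.pi_pos]⟩

theorem cos_pi_mul_div_two_mul_Gamma_mul_Gamma {x : ℝ} (hx : |x| < 1) :
    Real.cos (Real.pi * x / 2) * (Real.Gamma (1 - x) * Real.Gamma (1 + x)) =
      Real.Gamma (1 - x / 2) * Real.Gamma (1 + x / 2) := by
  have hreflect := Real.Gamma_mul_Gamma_one_sub ((1 + x) / 2)
  have hneg := Real.Gamma_mul_Gamma_add_half ((1 - x) / 2)
  have hpos := Real.Gamma_mul_Gamma_add_half ((1 + x) / 2)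
  have hsin : Real.sin (Real.pi * ((1 + x) / 2)) = Real.cos (Real.pi * x / 2) := by
    rw [← Real.sin_add_pi_div_two]
    ring_nf
  have htwo : (2 : ℝ) ^ x * 2 ^ (-x) = 1 := by
    rw [← Real.rpow_add two_pos, add_neg_cancel, Real.rpow_zero]
  rw [hsin, eq_div_iff (cos_pi_mul_div_two_pos hx).ne',
    show 1 - (1 + x) / 2 = (1 - x) / 2 by ring] at hreflect
  rw [show (1 - x) / 2 + 1 / 2 = 1 - x / 2 by ring, show 2 * ((1 - x) / 2) = 1 - x by ring,
    sub_sub_cancel] at hneg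
  rw [show (1 + x) / 2 + 1 / 2 = 1 + x / 2 by ring, show 2 * ((1 + x) / 2) = 1 + x by ring,
    show 1 - (1 + x) = -x by ring] at hpos
  refine mul_left_cancel₀ Real.pi_ne_zero ?_
  calc Real.pi * (Real.cos (Real.pi * x / 2) * (Real.Gamma (1 - x) * Real.Gamma (1 + x)))
      = Real.cos (Real.pi * x / 2) * (Real.Gamma (1 - x) * 2 ^ x * √Real.pi) *
          (Real.Gamma (1 + x) * 2 ^ (-x) * √Real.pi) := by
        linear_combination -(Real.cos (Real.pi * x / 2) * Real.Gamma (1 - x) *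
          Real.Gamma (1 + x)) *
            (2 ^ x * 2 ^ (-x) * Real.mul_self_sqrt Real.pi_pos.le + Real.pi * htwo)
    _ = Real.pi * (Real.Gamma (1 - x / 2) * Real.Gamma (1 + x / 2)) := by
        rw [← hneg, ← hpos]
        linear_combination Real.Gamma (1 - x / 2) * Real.Gamma (1 + x / 2) * hreflect

theorem log_cos_pi_mul_div_two {x : ℝ} (hx : |x| < 1) : Real.log (Real.cos (Real.pi * x / 2)) =
    Real.log (Real.Gamma (1 - x / 2)) + Real.log (Real.Gamma (1 - -(x / 2))) -
      (Real.log (Real.Gamma (1 - x)) + Real.log (Real.Gamma (1 - -x))) := by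
  have hΓ {y : ℝ} (hy : |y| < 1) : Real.Gamma (1 - y) ≠ 0 :=
    (Real.Gamma_pos_of_pos (sub_pos.2 (lt_of_abs_lt hy))).ne'
  have hx' : |x / 2| < 1 := by rw [abs_div, abs_two]; linarith
  have hhalf := hΓ hx'
  have hhalf' := hΓ ((abs_neg _).trans_lt hx')
  have hone := hΓ hx
  have hone' := hΓ ((abs_neg _).trans_lt hx)
  rw [← Real.log_mul hhalf hhalf', ← Real.log_mul hone hone',
    ← Real.log_div (mul_ne_zero hhalf hhalf') (mul_ne_zero hone hone'), sub_neg_eq_add,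
    sub_neg_eq_add, ← cos_pi_mul_div_two_mul_Gamma_mul_Gamma hx, mul_div_cancel_right₀]
  simpa using mul_ne_zero hone hone'

theorem hasSum_log_cos_pi_mul_div_two {x : ℝ} (hx : |x| < 1) :
    HasSum (fun n : ℕ => zetaR ↑(n + 2) / (n + 2) * (1 + (-1) ^ n) * ((1 / 2) ^ (n + 2) - 1) *
      x ^ (n + 2)) (Real.log (Real.cos (Real.pi * x / 2))) := by
  have hx' : |x / 2| < 1 := by rw [abs_div, abs_two]; linarith
  have h := ((hasSum_zetaR_mul_pow hx').add (hasSum_zetaR_mul_pow ((abs_neg _).trans_lt hx'))).sub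
    ((hasSum_zetaR_mul_pow hx).add (hasSum_zetaR_mul_pow ((abs_neg _).trans_lt hx)))
  have hterm (c : ℝ) (n : ℕ) : c * (1 + (-1) ^ n) * ((1 / 2) ^ (n + 2) - 1) * x ^ (n + 2) =
      c * (x / 2) ^ (n + 2) + c * (-(x / 2)) ^ (n + 2) -
        (c * x ^ (n + 2) + c * (-x) ^ (n + 2)) := by
    rw [div_eq_mul_one_div x 2, neg_pow (x * (1 / 2)), neg_pow x]
    simp only [mul_pow, pow_add (-1 : ℝ) n 2]
    ring
  have hvalue (a b c d γ : ℝ) : a + b - (c + d) =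
      a - γ * (x / 2) + (b - γ * -(x / 2)) - (c - γ * x + (d - γ * -x)) := by
    ring
  simp only [hterm]
  rw [log_cos_pi_mul_div_two hx, hvalue _ _ _ _ Real.eulerMascheroniConstant]
  exact h

end LogCos

section StableLogCumulants

/-- The cumulant generating function `t ↦ log E[|X| ^ t]` of `log |X|`, near `0`, for a strictly
stable random variable `X` with parameters `(b ^ 2, θ, τ)`, so that `b⁻¹` is the stability
index. -/
noncomputable def stableLogCGF (b θ τ t : ℝ) : ℝ :=
  Real.log (Real.Gamma (1 - b * t)) - Real.log (Real.Gamma (1 - t)) +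
    Real.log (Real.cos (Real.pi * (θ * t) / 2)) - Real.log (Real.cos (Real.pi * t / 2)) +
    (τ + Real.eulerMascheroniConstant * (1 - b)) * t

/-- The cumulants of `log |X|` for a strictly stable random variable `X` with parameters
`(b ^ 2, θ, τ)`. -/
noncomputable def stableLogCumulant (b θ τ : ℝ) : ℕ → ℝ
  | 0 => 0
  | 1 => τ
  | n + 2 => (n + 1)! * zetaR ↑(n + 2) *
      (b ^ (n + 2) - 1 + (1 + (-1) ^ n) * (1 - (1 / 2) ^ (n + 2)) * (1 - θ ^ (n + 2)))

variable {b θ τ : ℝ}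

theorem exp_stableLogCGF (hθ : |θ| ≤ 1) {t : ℝ} (ht : |t| < 1) (hbt : b * t < 1) :
    Real.exp (stableLogCGF b θ τ t) = Real.Gamma (1 - b * t) / Real.Gamma (1 - t) *
      (Real.cos (Real.pi * (θ * t) / 2) / Real.cos (Real.pi * t / 2)) *
      Real.exp ((τ + Real.eulerMascheroniConstant * (1 - b)) * t) := by
  have hΓb : 0 < Real.Gamma (1 - b * t) := Real.Gamma_pos_of_pos (by linarith)
  have hΓ : 0 < Real.Gamma (1 - t) := Real.Gamma_pos_of_pos (by linarith [(abs_lt.1 ht).2])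
  have hcosθ := cos_pi_mul_div_two_pos
    ((abs_mul θ t).trans_lt (mul_lt_one_of_nonneg_of_lt_one_right hθ (abs_nonneg t) ht))
  have hcos := cos_pi_mul_div_two_pos ht
  rw [stableLogCGF, Real.exp_add, Real.exp_sub, Real.exp_add, Real.exp_sub, Real.exp_log hΓb,
    Real.exp_log hΓ, Real.exp_log hcosθ, Real.exp_log hcos, mul_div_assoc]

theorem hasSum_stableLogCGF (hθ : |θ| ≤ 1) {t : ℝ} (ht : |t| < 1) (hbt : |b * t| < 1) :
    HasSum (fun n : ℕ => stableLogCumulant b θ τ n / n ! * t ^ n) (stableLogCGF b θ τ t) := by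
  have hθt : |θ * t| < 1 :=
    (abs_mul θ t).trans_lt (mul_lt_one_of_nonneg_of_lt_one_right hθ (abs_nonneg t) ht)
  have h := (((hasSum_zetaR_mul_pow hbt).sub (hasSum_zetaR_mul_pow ht)).add
    (hasSum_log_cos_pi_mul_div_two hθt)).sub (hasSum_log_cos_pi_mul_div_two ht)
  rw [← hasSum_nat_add_iff' 2]
  convert h using 1
  · ext n
    have hfact : ((n + 2)! : ℝ) = (n + 2) * (n + 1)! := by
      rw [Nat.factorial_succ]
      push_cast
      ring
    simp only [stableLogCumulant, hfact]
    field_simp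
    ring
  · simp only [Finset.sum_range_succ, Finset.sum_range_zero, stableLogCumulant, stableLogCGF]
    norm_num
    ring

theorem eventually_hasSum_stableLogCGF (hθ : |θ| ≤ 1) : ∀ᶠ t in 𝓝 0,
    HasSum (fun n : ℕ => stableLogCumulant b θ τ n / n ! * t ^ n) (stableLogCGF b θ τ t) := by
  have h1 : ∀ᶠ t : ℝ in 𝓝 0, |t| < 1 :=
    continuous_abs.tendsto' (0 : ℝ) 0 abs_zero |>.eventually_lt_const one_pos
  have h2 : ∀ᶠ t : ℝ in 𝓝 0, |b * t| < 1 :=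
    (show Continuous fun t => |b * t| by fun_prop).tendsto' 0 0 (by simp)
      |>.eventually_lt_const one_pos
  filter_upwards [h1, h2] with t ht hbt using hasSum_stableLogCGF hθ ht hbt

theorem analyticAt_stableLogCGF (hθ : |θ| ≤ 1) : AnalyticAt ℝ (stableLogCGF b θ τ) 0 :=
  (hasFPowerSeriesAt_ofScalars_zero_of_eventually_hasSum
    (eventually_hasSum_stableLogCGF hθ)).analyticAt

theorem iteratedDeriv_stableLogCGF_zero (hθ : |θ| ≤ 1) (n : ℕ) :
    iteratedDeriv n (stableLogCGF b θ τ) 0 = stableLogCumulant b θ τ n := by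
  rw [iteratedDeriv_zero_of_eventually_hasSum (eventually_hasSum_stableLogCGF hθ)]
  field_simp

theorem stableLogCumulant_two : stableLogCumulant b θ τ 2 =
    Real.pi ^ 2 / 4 * (1 - θ ^ 2) + Real.pi ^ 2 / 6 * (b ^ 2 - 1) := by
  norm_num [stableLogCumulant, zetaR_two]
  ring

theorem stableLogCumulant_three :
    stableLogCumulant b θ τ 3 = 2 * zetaR 3 * (b ^ 3 - 1) := by
  norm_num [stableLogCumulant]

theorem stableLogCumulant_four : stableLogCumulant b θ τ 4 =
    Real.pi ^ 4 * ((1 - θ ^ 4) / 8 + (b ^ 4 - 1) / 15) := by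
  norm_num [stableLogCumulant, zetaR_four, Nat.factorial]
  ring

theorem stableLogCumulant_five :
    stableLogCumulant b θ τ 5 = 24 * zetaR 5 * (b ^ 5 - 1) := by
  norm_num [stableLogCumulant, Nat.factorial]

theorem stableLogCumulant_six : stableLogCumulant b θ τ 6 =
    8 * Real.pi ^ 6 * ((1 - θ ^ 6) / 32 + (b ^ 6 - 1) / 63) := by
  norm_num [stableLogCumulant, zetaR_six, Nat.factorial]
  ring

end StableLogCumulants

section MellinExp

variable {A : ℂ} {p s : ℝ}

theorem integrableOn_exp_neg_mul_rpow {b : ℝ} (hb : 0 < b) (hp : 0 < p) :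
    IntegrableOn (fun t : ℝ => Real.exp (-b * t ^ p)) (Ioi 0) := by
  simpa using integrableOn_rpow_mul_exp_neg_mul_rpow neg_one_lt_zero hp hb

theorem integral_cexp_neg_mul_rpow (hA : 0 < A.re) (hp : 0 < p) :
    ∫ t : ℝ in Ioi 0, Complex.exp (-A * ↑(t ^ p)) =
      A ^ ((-1 / p : ℝ) : ℂ) * Real.Gamma (1 / p + 1) := by
  let ρ : Measure ℝ := volume.restrict (Ioi 0)
  let U : Set ℂ := {z | z.re < 0}
  have hexp : Iio 0 ⊆ interior (integrableExpSet (fun t : ℝ => t ^ p) ρ) := by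
    refine interior_maximal (fun b hb => ?_) isOpen_Iio
    simpa [integrableExpSet, IntegrableOn, ρ] using
      integrableOn_exp_neg_mul_rpow (neg_pos.2 hb) hp
  have hmgf : AnalyticOnNhd ℂ (complexMGF (fun t : ℝ => t ^ p) ρ) U := fun z hz =>
    analyticAt_complexMGF (hexp hz)
  have hpow : AnalyticOnNhd ℂ
      (fun z => (-z) ^ ((-1 / p : ℝ) : ℂ) * (Real.Gamma (1 / p + 1) : ℂ)) U := fun z hz =>
    (analyticAt_id.neg.cpow analyticAt_const (.inl (by simpa [U] using hz))).mul analyticAt_const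
  have hreal : ∀ᶠ x : ℝ in 𝓝[≠] (-1), complexMGF (fun t : ℝ => t ^ p) ρ x =
      (-x : ℂ) ^ ((-1 / p : ℝ) : ℂ) * (Real.Gamma (1 / p + 1) : ℂ) := by
    filter_upwards [mem_nhdsWithin_of_mem_nhds (Iio_mem_nhds neg_one_lt_zero)] with x hx
    have hx' : 0 < -x := neg_pos.2 hx
    have := integral_exp_neg_mul_rpow hp hx'
    rw [neg_neg] at this
    rw [complexMGF_ofReal, mgf, this, Complex.ofReal_mul, Complex.ofReal_cpow hx'.le,
      Complex.ofReal_neg]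
  have hembed : Tendsto ((↑) : ℝ → ℂ) (𝓝[≠] (-1)) (𝓝[≠] ((-1 : ℝ) : ℂ)) :=
    Complex.continuous_ofReal.continuousWithinAt.tendsto_nhdsWithin fun x hx =>
      Complex.ofReal_injective.ne hx
  have := hmgf.eqOn_of_preconnected_of_frequently_eq hpow
    (convex_halfSpace_re_lt 0).isPreconnected (by simp [U]) (hembed.frequently hreal.frequently)
  simpa [complexMGF, ρ] using this (show -A ∈ U by simpa [U] using hA)

theorem mellinConvergent_cexp_neg_mul_rpow (hA : 0 < A.re) (hp : 0 < p) (hs : 0 < s) :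
    MellinConvergent (fun t => Complex.exp (-A * ↑(t ^ p))) s := by
  have hbound := integrableOn_rpow_mul_exp_neg_mul_rpow (show -1 < s - 1 by linarith) hp hA
  refine hbound.mono' (Measurable.aestronglyMeasurable (by fun_prop)) ?_
  filter_upwards [ae_restrict_mem measurableSet_Ioi] with t (ht : 0 < t)
  rw [norm_smul, Complex.norm_cpow_eq_rpow_re_of_pos ht, Complex.norm_exp, Complex.re_mul_ofReal]
  simp

theorem mellin_cexp_neg_mul_rpow (hA : 0 < A.re) (hp : 0 < p) (hs : 0 < s) :
    mellin (fun t => Complex.exp (-A * ↑(t ^ p))) s =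
      p⁻¹ * Real.Gamma (s / p) * A ^ ((-(s / p) : ℝ) : ℂ) := by
  have hsubst : mellin (fun t => Complex.exp (-A * ↑(t ^ p))) s =
      mellin (fun t => Complex.exp (-A * ↑((t ^ s) ^ (p / s)))) s := by
    refine setIntegral_congr_fun measurableSet_Ioi fun t (ht : 0 < t) => ?_
    simp only [← Real.rpow_mul ht.le, mul_div_cancel₀ p hs.ne']
  rw [hsubst, mellin_comp_rpow (fun t => Complex.exp (-A * ↑(t ^ (p / s)))),
    div_self (Complex.ofReal_ne_zero.2 hs.ne'), mellin]
  simp only [sub_self, Complex.cpow_zero, one_smul]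
  rw [integral_cexp_neg_mul_rpow hA (div_pos hp hs), one_div_div,
    Real.Gamma_add_one (by positivity), neg_div, one_div_div, abs_of_pos hs]
  have hs' : (s : ℂ) ≠ 0 := Complex.ofReal_ne_zero.2 hs.ne'
  simp only [Complex.real_smul, Complex.ofReal_mul, Complex.ofReal_inv, Complex.ofReal_div]
  field_simp

end MellinExp

section Cpow

variable {z : ℂ} {s : ℝ}

theorem cos_mul_norm_rpow_neg_le_re_cpow_neg (hz : 0 ≤ z.re) (hs0 : 0 ≤ s) (hs2 : s ≤ 2) :
    Real.cos (Real.pi * s / 2) * ‖z‖ ^ (-s) ≤ (z ^ ((-s : ℝ) : ℂ)).re := by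
  have harg : |z.arg| ≤ Real.pi / 2 := Complex.abs_arg_le_pi_div_two_iff.2 hz
  rw [Complex.cpow_ofReal_re, mul_comm, mul_neg, Real.cos_neg, ← Real.cos_abs (z.arg * s), abs_mul,
    abs_of_nonneg hs0]
  refine mul_le_mul_of_nonneg_left (Real.cos_le_cos_of_nonneg_of_le_pi ?_ ?_ ?_) (by positivity)
  · positivity
  · nlinarith [Real.pi_pos]
  · nlinarith

theorem re_cpow_neg_of_re_eq_zero (hz : z.re = 0) (hz0 : z ≠ 0) :
    (z ^ ((-s : ℝ) : ℂ)).re = Real.cos (Real.pi * s / 2) * ‖z‖ ^ (-s) := by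
  have harg : |z.arg| = |Real.pi / 2| := by
    rw [abs_of_pos Real.pi_div_two_pos]
    refine le_antisymm (Complex.abs_arg_le_pi_div_two_iff.2 hz.ge) ?_
    rw [← not_lt, Complex.abs_arg_lt_pi_div_two_iff]
    simp [hz, hz0]
  rw [Complex.cpow_ofReal_re, mul_comm, mul_neg, Real.cos_neg, ← Real.cos_abs (z.arg * s), abs_mul,
    harg, ← abs_mul, Real.cos_abs, mul_div_right_comm]

end Cpow

section MellinCharFun

theorem integrable_of_tendsto_of_integral_norm_le {α E : Type*} {mα : MeasurableSpace α}
    [NormedAddCommGroup E] {μ : Measure α} {F : ℕ → α → E} {f : α → E} {C : ℕ → ℝ} {c : ℝ}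
    (hFf : ∀ᵐ x ∂μ, Tendsto (fun n => F n x) atTop (𝓝 (f x))) (hF : ∀ n, Integrable (F n) μ)
    (hFC : ∀ n, ∫ x, ‖F n x‖ ∂μ ≤ C n) (hC : Tendsto C atTop (𝓝 c)) : Integrable f μ := by
  refine ⟨aestronglyMeasurable_of_tendsto_ae _ (fun n => (hF n).1) hFf, ?_⟩
  have henorm : ∀ᵐ x ∂μ, ‖f x‖ₑ = liminf (fun n => ‖F n x‖ₑ) atTop := by
    filter_upwards [hFf] with x hx using hx.enorm.liminf_eq.symm
  calc ∫⁻ x, ‖f x‖ₑ ∂μ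
      = ∫⁻ x, liminf (fun n => ‖F n x‖ₑ) atTop ∂μ := lintegral_congr_ae henorm
    _ ≤ liminf (fun n => ∫⁻ x, ‖F n x‖ₑ ∂μ) atTop :=
        lintegral_liminf_le' fun n => (hF n).1.enorm
    _ ≤ liminf (fun n => ENNReal.ofReal (C n)) atTop :=
        liminf_le_liminf <| .of_forall fun n => by
          rw [← ofReal_integral_norm_eq_lintegral_enorm (hF n)]
          exact ENNReal.ofReal_le_ofReal (hFC n)
    _ = ENNReal.ofReal c := (ENNReal.tendsto_ofReal hC).liminf_eq
    _ < ⊤ := ENNReal.ofReal_lt_top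

theorem tendsto_mellin_exp_neg_smul {E : Type*} [NormedAddCommGroup E] [NormedSpace ℂ E]
    {f : ℝ → E} {s : ℂ} (hf : MellinConvergent f s) :
    Tendsto (fun ε : ℝ => mellin (fun t => Real.exp (-ε * t) • f t) s) (𝓝[>] 0)
      (𝓝 (mellin f s)) := by
  have hcomm (ε t : ℝ) : (t : ℂ) ^ (s - 1) • Real.exp (-ε * t) • f t =
      Real.exp (-ε * t) • (t : ℂ) ^ (s - 1) • f t := smul_comm _ _ _
  simp only [mellin, hcomm]
  refine tendsto_integral_filter_of_dominated_convergence
    (fun t => ‖(t : ℂ) ^ (s - 1) • f t‖) (.of_forall fun ε => ?_) ?_ hf.norm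
    (.of_forall fun t => ?_)
  · have hexp : Continuous fun t : ℝ => Real.exp (-ε * t) := by fun_prop
    exact hexp.aestronglyMeasurable.smul hf.aestronglyMeasurable
  · filter_upwards [self_mem_nhdsWithin] with ε (hε : 0 < ε)
    filter_upwards [ae_restrict_mem measurableSet_Ioi] with t (ht : 0 < t)
    rw [norm_smul, Real.norm_of_nonneg (Real.exp_nonneg _)]
    exact mul_le_of_le_one_left (norm_nonneg _) (Real.exp_le_one_iff.2 (by nlinarith))
  · have : Continuous fun ε : ℝ => Real.exp (-ε * t) • (t : ℂ) ^ (s - 1) • f t := by fun_prop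
    simpa using (this.tendsto 0).mono_left nhdsWithin_le_nhds

variable {μ : Measure ℝ} [IsFiniteMeasure μ] {s : ℝ}

theorem mellin_exp_neg_smul_charFun {ε : ℝ} (hε : 0 < ε) (hs : 0 < s) :
    mellin (fun t => Real.exp (-ε * t) • charFun μ t) s =
      Real.Gamma s * ∫ x, (ε - x * Complex.I) ^ ((-s : ℝ) : ℂ) ∂μ := by
  have hkernel (x : ℝ) := mellin_cexp_neg_mul_rpow
    (show 0 < (ε - x * Complex.I).re by simpa using hε) one_pos hs
  have hfubini : Integrable (Function.uncurry fun t x : ℝ =>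
      (t : ℂ) ^ ((s : ℂ) - 1) * Complex.exp (-(ε - x * Complex.I) * t))
      ((volume.restrict (Ioi 0)).prod μ) := by
    have hbound := (integrableOn_rpow_mul_exp_neg_mul_rpow (show -1 < s - 1 by linarith) one_pos
      hε).mul_prod (integrable_const (μ := μ) (1 : ℝ))
    refine hbound.mono' (Measurable.aestronglyMeasurable (by unfold Function.uncurry; fun_prop)) ?_
    filter_upwards [Measure.quasiMeasurePreserving_fst.ae (ae_restrict_mem measurableSet_Ioi)]
      with z (hz : 0 < z.1)
    rw [Function.uncurry, norm_mul, Complex.norm_cpow_eq_rpow_re_of_pos hz, Complex.norm_exp,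
      Complex.re_mul_ofReal]
    simp
  have hinner (t : ℝ) : (t : ℂ) ^ ((s : ℂ) - 1) • Real.exp (-ε * t) • charFun μ t =
      ∫ x, (t : ℂ) ^ ((s : ℂ) - 1) * Complex.exp (-(ε - x * Complex.I) * t) ∂μ := by
    rw [charFun_apply_real, integral_const_mul, Complex.real_smul, Complex.ofReal_exp,
      ← integral_const_mul, smul_eq_mul]
    congr with x
    rw [← Complex.exp_add]
    push_cast
    ring_nf
  simp only [mellin, Real.rpow_one, smul_eq_mul] at hkernel
  rw [mellin]
  simp only [hinner]
  rw [integral_integral_swap hfubini, ← integral_const_mul]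
  simp only [hkernel]
  simp

theorem tendsto_sub_mul_I_cpow {x : ℝ} (hx : x ≠ 0) (c : ℂ) :
    Tendsto (fun ε : ℝ => (ε - x * Complex.I) ^ c) (𝓝[>] 0) (𝓝 ((-(x * Complex.I)) ^ c)) := by
  have hcont : Continuous fun ε : ℝ => (ε - x * Complex.I : ℂ) := by fun_prop
  have hlim : Tendsto (fun ε : ℝ => (ε - x * Complex.I : ℂ)) (𝓝[>] 0)
      (𝓝 (-(x * Complex.I))) :=
    (hcont.tendsto' 0 _ (by simp)).mono_left nhdsWithin_le_nhds
  exact (continuousAt_cpow_const (by simp [Complex.mem_slitPlane_iff, hx])).tendsto.comp hlim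

theorem integrable_sub_mul_I_cpow_neg {ε : ℝ} (hε : 0 < ε) (hs : 0 ≤ s) :
    Integrable (fun x : ℝ => (ε - x * Complex.I) ^ ((-s : ℝ) : ℂ)) μ := by
  refine .of_bound (Measurable.aestronglyMeasurable (by fun_prop)) (ε ^ (-s))
    (.of_forall fun x => ?_)
  rw [Complex.norm_cpow_real]
  refine Real.rpow_le_rpow_of_nonpos hε ?_ (by linarith)
  simpa [abs_of_pos hε] using Complex.abs_re_le_norm (ε - x * Complex.I)

theorem integral_norm_sub_mul_I_cpow_neg_le {ε : ℝ} (hε : 0 < ε) (hs0 : 0 < s) (hs2 : s ≤ 2) :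
    Real.Gamma s * (Real.cos (Real.pi * s / 2) *
        ∫ x, ‖((ε : ℂ) - x * Complex.I) ^ ((-s : ℝ) : ℂ)‖ ∂μ) ≤
      (mellin (fun t => Real.exp (-ε * t) • charFun μ t) s).re := by
  have hint := integrable_sub_mul_I_cpow_neg (μ := μ) hε hs0.le
  rw [mellin_exp_neg_smul_charFun hε hs0, Complex.re_ofReal_mul, ← integral_const_mul,
    ← RCLike.re_eq_complex_re, ← integral_re hint]
  refine mul_le_mul_of_nonneg_left (integral_mono (hint.norm.const_mul _) hint.re fun x => ?_)
    (Real.Gamma_pos_of_pos hs0).le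
  simp only [Complex.norm_cpow_real]
  exact cos_mul_norm_rpow_neg_le_re_cpow_neg (by simpa using hε.le) hs0.le hs2

theorem integrable_abs_rpow_neg_of_mellinConvergent_charFun (hs0 : 0 < s) (hs1 : s < 1)
    (hμ : ∀ᵐ x ∂μ, x ≠ 0) (h : MellinConvergent (charFun μ) s) :
    Integrable (fun x => |x| ^ (-s)) μ := by
  have hcos : 0 < Real.cos (Real.pi * s / 2) :=
    cos_pi_mul_div_two_pos (abs_lt.2 ⟨by linarith, hs1⟩)
  have hΓ : 0 < Real.Gamma s := Real.Gamma_pos_of_pos hs0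
  have hε : Tendsto (fun n : ℕ => 1 / ((n : ℝ) + 1)) atTop (𝓝[>] 0) :=
    tendsto_nhdsWithin_iff.2 ⟨tendsto_one_div_add_atTop_nhds_zero_nat,
      .of_forall fun _ => mem_Ioi.2 Nat.one_div_pos_of_nat⟩
  have hmellin := (Complex.continuous_re.tendsto _).comp
    ((tendsto_mellin_exp_neg_smul h).comp hε)
  have hlim : ∀ᵐ x : ℝ ∂μ, Tendsto
      (fun n : ℕ => ((1 / (n + 1) : ℝ) - x * Complex.I) ^ ((-s : ℝ) : ℂ)) atTop
      (𝓝 ((-(x * Complex.I)) ^ ((-s : ℝ) : ℂ))) := by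
    filter_upwards [hμ] with x hx using (tendsto_sub_mul_I_cpow hx _).comp hε
  refine (integrable_of_tendsto_of_integral_norm_le hlim
    (fun n => integrable_sub_mul_I_cpow_neg Nat.one_div_pos_of_nat hs0.le) (fun n => ?_)
    (hmellin.div_const (Real.Gamma s * Real.cos (Real.pi * s / 2)))).norm.congr
    (.of_forall fun x => ?_)
  · rw [le_div_iff₀' (mul_pos hΓ hcos), mul_assoc]
    exact integral_norm_sub_mul_I_cpow_neg_le Nat.one_div_pos_of_nat hs0 (by linarith)
  · simp only [Complex.norm_cpow_real]
    simp

theorem mellin_charFun (hs0 : 0 < s) (hμ : ∀ᵐ x ∂μ, x ≠ 0) (h : MellinConvergent (charFun μ) s)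
    (hint : Integrable (fun x => |x| ^ (-s)) μ) :
    mellin (charFun μ) s = Real.Gamma s * ∫ x, (-(x * Complex.I)) ^ ((-s : ℝ) : ℂ) ∂μ := by
  refine tendsto_nhds_unique (tendsto_mellin_exp_neg_smul h) ?_
  have hlim : Tendsto (fun ε : ℝ => ∫ x : ℝ, (ε - x * Complex.I) ^ ((-s : ℝ) : ℂ) ∂μ) (𝓝[>] 0)
      (𝓝 (∫ x : ℝ, (-(x * Complex.I)) ^ ((-s : ℝ) : ℂ) ∂μ)) := by
    refine tendsto_integral_filter_of_dominated_convergence _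
      (.of_forall fun ε => Measurable.aestronglyMeasurable (by fun_prop))
      (.of_forall fun ε => ?_) hint ?_
    · filter_upwards [hμ] with x hx
      rw [Complex.norm_cpow_real]
      refine Real.rpow_le_rpow_of_nonpos (abs_pos.2 hx) ?_ (by linarith)
      simpa using Complex.abs_im_le_norm (ε - x * Complex.I)
    · filter_upwards [hμ] with x hx using tendsto_sub_mul_I_cpow hx _
  refine (hlim.const_mul (Real.Gamma s : ℂ)).congr' ?_
  filter_upwards [self_mem_nhdsWithin] with ε hε using (mellin_exp_neg_smul_charFun hε hs0).symm

theorem re_mellin_charFun (hs0 : 0 < s) (hs1 : s < 1) (hμ : ∀ᵐ x ∂μ, x ≠ 0)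
    (h : MellinConvergent (charFun μ) s) : (mellin (charFun μ) s).re =
      Real.Gamma s * (Real.cos (Real.pi * s / 2) * ∫ x, |x| ^ (-s) ∂μ) := by
  have hint := integrable_abs_rpow_neg_of_mellinConvergent_charFun hs0 hs1 hμ h
  have hint' : Integrable (fun x : ℝ => (-(x * Complex.I)) ^ ((-s : ℝ) : ℂ)) μ := by
    refine hint.mono' (Measurable.aestronglyMeasurable (by fun_prop)) (.of_forall fun x => ?_)
    rw [Complex.norm_cpow_real]
    simp
  rw [mellin_charFun hs0 hμ h hint, Complex.re_ofReal_mul, ← RCLike.re_eq_complex_re,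
    ← integral_re hint', ← integral_const_mul (Real.cos _)]
  congr 1
  refine integral_congr_ae ?_
  filter_upwards [hμ] with x hx
  simpa using re_cpow_neg_of_re_eq_zero (z := -(x * Complex.I)) (s := s) (by simp) (by simp [hx])

end MellinCharFun

section StableLaw

variable {μ : Measure ℝ}

theorem Gamma_mul_integral_abs_rpow_neg_of_charFun_eqOn [IsFiniteMeasure μ] {A : ℂ} {p s : ℝ}
    (hA : 0 < A.re) (hp : 0 < p) (hs0 : 0 < s) (hs1 : s < 1) (hμ : ∀ᵐ x ∂μ, x ≠ 0)
    (hφ : EqOn (charFun μ) (fun t => Complex.exp (-A * ↑(t ^ p))) (Ioi 0)) :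
    Real.Gamma (1 + s) * (Real.cos (Real.pi * s / 2) * ∫ x, |x| ^ (-s) ∂μ) =
      Real.Gamma (1 + s / p) * (A ^ ((-(s / p) : ℝ) : ℂ)).re := by
  have hkernel : EqOn (fun t : ℝ => (t : ℂ) ^ ((s : ℂ) - 1) • charFun μ t)
      (fun t : ℝ => (t : ℂ) ^ ((s : ℂ) - 1) • Complex.exp (-A * ↑(t ^ p))) (Ioi 0) :=
    fun t ht => by simp only [hφ ht]
  have hconv : MellinConvergent (charFun μ) s :=
    (mellinConvergent_cexp_neg_mul_rpow hA hp hs0).congr_fun hkernel.symm measurableSet_Ioi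
  have hmellin := (setIntegral_congr_fun measurableSet_Ioi hkernel).trans
    (mellin_cexp_neg_mul_rpow hA hp hs0)
  have hre := re_mellin_charFun hs0 hs1 hμ hconv
  rw [mellin, hmellin, ← Complex.ofReal_mul, Complex.re_ofReal_mul] at hre
  rw [add_comm, Real.Gamma_add_one hs0.ne', add_comm, Real.Gamma_add_one (by positivity),
    mul_assoc, ← hre]
  field_simp

theorem eq_of_charFun_eqOn_Ioi {μ' : Measure ℝ} [IsProbabilityMeasure μ] [IsProbabilityMeasure μ']
    (h : EqOn (charFun μ) (charFun μ') (Ioi 0)) : μ = μ' := by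
  refine Measure.ext_of_charFun (funext fun t => ?_)
  rcases lt_trichotomy t 0 with ht | rfl | ht
  · rw [← neg_neg t, charFun_neg, h (neg_pos.2 ht), ← charFun_neg]
  · simp
  · exact h ht

theorem re_cexp_sub_mul_I_cpow {q : ℝ} (hq : |q| < Real.pi) (p r : ℝ) :
    ((Complex.exp (p - q * Complex.I)) ^ (r : ℂ)).re = Real.exp (r * p) * Real.cos (r * q) := by
  have him : (p - q * Complex.I).im = -q := by simp
  have hre : (p - q * Complex.I).re = p := by simp
  rw [Complex.cpow_def_of_ne_zero (Complex.exp_ne_zero _), Complex.log_exp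
    (by rw [him]; linarith [(abs_lt.1 hq).2]) (by rw [him]; linarith [(abs_lt.1 hq).1]), mul_comm,
    Complex.exp_re, Complex.re_ofReal_mul, Complex.im_ofReal_mul, hre, him, mul_neg, Real.cos_neg]

end StableLaw

namespace IsStrictlyStable

variable {Ω : Type*} [MeasureSpace Ω] {X : Ω → ℝ} {ν θ τ : ℝ}

theorem sqrt_pos (hX : IsStrictlyStable X ν θ τ) : 0 < √ν :=
  Real.sqrt_pos.2 (by linarith [hX.2.1])

theorem abs_le_one (hX : IsStrictlyStable X ν θ τ) : |θ| ≤ 1 := hX.2.2.1.trans (min_le_left _ _)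

theorem abs_lt_sqrt_or_eq_one (hX : IsStrictlyStable X ν θ τ) : |θ| < √ν ∨ |θ| = 1 ∧ √ν = 1 := by
  have h1 := hX.abs_le_one
  have h2 : |θ| ≤ 2 * √ν - 1 := hX.2.2.1.trans (min_le_right _ _)
  by_cases h : |θ| < √ν
  · exact .inl h
  · exact .inr ⟨by linarith, by linarith⟩

theorem ae_ne_zero (hX : IsStrictlyStable X ν θ τ) : ∀ᵐ ω, X ω ≠ 0 := by
  simpa [ae_iff] using hX.2.2.2.1

theorem charFun_map_of_pos (hX : IsStrictlyStable X ν θ τ) {t : ℝ} (ht : 0 < t) :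
    charFun (Measure.map X ℙ) t =
      Complex.exp (-Complex.exp (↑((√ν)⁻¹ * τ + Real.eulerMascheroniConstant * ((√ν)⁻¹ - 1)) -
        ↑((√ν)⁻¹ * (Real.pi / 2 * θ)) * Complex.I) * ↑(t ^ (√ν)⁻¹)) := by
  obtain ⟨hXm, hν, -, -, -, hφ⟩ := hX
  have hexponent : ν ^ (-(1 / 2) : ℝ) = (√ν)⁻¹ := by
    rw [Real.rpow_neg (by linarith), Real.sqrt_eq_rpow]
  rw [charFun_apply_real, integral_map hXm.aemeasurable (Measurable.aestronglyMeasurable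
    (by fun_prop))]
  calc ∫ ω, Complex.exp (t * X ω * Complex.I)
      = ∫ ω, Complex.exp (Complex.I * t * X ω) := by
        congr with ω
        ring_nf
    _ = _ := by
        rw [hφ t ht.ne', abs_of_pos ht, Real.sign_of_pos ht, hexponent, Real.rpow_def_of_pos ht,
          Complex.ofReal_exp, neg_mul, ← Complex.exp_add]
        push_cast
        ring_nf

variable [IsProbabilityMeasure (ℙ : Measure Ω)]

theorem integral_abs_rpow_neg (hX : IsStrictlyStable X ν θ τ) (hθ : |θ| < √ν) {s : ℝ}
    (hs0 : 0 < s) (hs1 : s < 1) :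
    Real.Gamma (1 + s) * (Real.cos (Real.pi * s / 2) * ∫ ω, |X ω| ^ (-s)) =
      Real.Gamma (1 + √ν * s) * (Real.cos (Real.pi * (θ * s) / 2) *
        Real.exp (-(τ + Real.eulerMascheroniConstant * (1 - √ν)) * s)) := by
  have hν := hX.sqrt_pos
  have hXm := hX.1
  set p : ℝ := (√ν)⁻¹ * τ + Real.eulerMascheroniConstant * ((√ν)⁻¹ - 1) with hp
  set q : ℝ := (√ν)⁻¹ * (Real.pi / 2 * θ) with hq
  have hq2 : |q| < Real.pi / 2 := by
    rw [hq, abs_mul, abs_mul, abs_of_pos (inv_pos.2 hν), abs_of_pos Real.pi_div_two_pos,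
      inv_mul_lt_iff₀ hν, mul_comm]
    exact mul_lt_mul_of_pos_right hθ Real.pi_div_two_pos
  have hre_pos : 0 < (Complex.exp (p - q * Complex.I)).re := by
    rw [Complex.exp_re]
    refine mul_pos (Real.exp_pos _) (Real.cos_pos_of_mem_Ioo ?_)
    simpa [abs_lt, and_comm, neg_lt] using hq2
  have hmoment := Gamma_mul_integral_abs_rpow_neg_of_charFun_eqOn (μ := Measure.map X ℙ) hre_pos
    (inv_pos.2 hν) hs0 hs1
    ((ae_map_iff hXm.aemeasurable (measurableSet_singleton 0).compl).2 hX.ae_ne_zero)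
    fun t ht => hX.charFun_map_of_pos ht
  have hexp : -(√ν * s) * p = -(τ + Real.eulerMascheroniConstant * (1 - √ν)) * s := by
    rw [hp]
    field_simp
  have hcos : -(√ν * s) * q = -(Real.pi * (θ * s) / 2) := by
    rw [hq]
    field_simp
  rwa [integral_map hXm.aemeasurable (Measurable.aestronglyMeasurable (by fun_prop)),
    re_cexp_sub_mul_I_cpow (hq2.trans (by linarith [Real.pi_pos])), div_inv_eq_mul, mul_comm s,
    hexp, hcos, Real.cos_neg, mul_comm (Real.exp _)] at hmoment

theorem map_eq_dirac (hX : IsStrictlyStable X ν θ τ) (hθ : |θ| = 1) (hν : √ν = 1) :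
    Measure.map X ℙ = Measure.dirac (θ * Real.exp τ) := by
  have := Measure.isProbabilityMeasure_map hX.1.aemeasurable (μ := (ℙ : Measure Ω))
  refine eq_of_charFun_eqOn_Ioi fun t ht => ?_
  have hrot : Complex.exp (-(↑(Real.pi / 2 * θ) * Complex.I)) = -(θ * Complex.I) := by
    rcases eq_or_eq_neg_of_abs_eq hθ with rfl | rfl
    · simpa [neg_div] using Complex.exp_neg_pi_div_two_mul_I
    · simp [Complex.exp_pi_div_two_mul_I]
  rw [hX.charFun_map_of_pos ht, charFun_dirac, hν, inv_one, one_mul, one_mul, sub_self, mul_zero,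
    add_zero, sub_eq_add_neg, Complex.exp_add, hrot, Real.rpow_one, RCLike.inner_apply]
  simp only [RCLike.conj_to_real, Complex.ofReal_mul, Complex.ofReal_exp]
  ring_nf

theorem mgf_log_abs (hX : IsStrictlyStable X ν θ τ) {t : ℝ} (ht : t ∈ Ioo (-1) 0) :
    mgf (fun ω => Real.log |X ω|) ℙ t = Real.exp (stableLogCGF √ν θ τ t) := by
  obtain ⟨ht1, ht0⟩ := ht
  have habs : |t| < 1 := abs_lt.2 ⟨ht1, by linarith⟩
  have hνt : √ν * t < 1 := (mul_nonpos_of_nonneg_of_nonpos hX.sqrt_pos.le ht0.le).trans_lt one_pos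
  have hcos : 0 < Real.cos (Real.pi * t / 2) := cos_pi_mul_div_two_pos habs
  have hΓ : 0 < Real.Gamma (1 - t) := Real.Gamma_pos_of_pos (by linarith)
  rw [exp_stableLogCGF hX.abs_le_one habs hνt]
  rcases hX.abs_lt_sqrt_or_eq_one with hθ | ⟨hθ, hν⟩
  · have hmgf : mgf (fun ω => Real.log |X ω|) ℙ t = ∫ ω, |X ω| ^ t := by
      refine integral_congr_ae ?_
      filter_upwards [hX.ae_ne_zero] with ω hω
      rw [Real.rpow_def_of_pos (abs_pos.2 hω), mul_comm]
    have h := hX.integral_abs_rpow_neg hθ (neg_pos.2 ht0) (by linarith)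
    simp only [mul_neg, neg_neg, neg_div, Real.cos_neg, ← sub_eq_add_neg, neg_mul] at h
    rw [hmgf, div_mul_div_comm, div_mul_eq_mul_div, eq_div_iff (mul_pos hΓ hcos).ne']
    linear_combination h
  · have hcosθ : Real.cos (Real.pi * (θ * t) / 2) = Real.cos (Real.pi * t / 2) := by
      rcases eq_or_eq_neg_of_abs_eq hθ with rfl | rfl
      · rw [one_mul]
      · rw [neg_one_mul, mul_neg, neg_div, Real.cos_neg]
    have hlog : Real.log |θ * Real.exp τ| = τ := by
      rw [abs_mul, hθ, one_mul, Real.abs_exp, Real.log_exp]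
    have hmap := mgf_map (X := fun x => Real.log |x|) (t := t) hX.1.aemeasurable
      (μ := (ℙ : Measure Ω)) (Measurable.aestronglyMeasurable (by fun_prop))
    refine hmap.symm.trans ?_
    rw [hX.map_eq_dirac hθ hν, mgf, integral_dirac, hlog, hcosθ, hν, one_mul, div_self hΓ.ne',
      div_self hcos.ne', sub_self, mul_zero, add_zero, one_mul, one_mul, mul_comm]

theorem integral_log_abs_pow (hX : IsStrictlyStable X ν θ τ) (n : ℕ) :
    ∫ ω, Real.log |X ω| ^ n = iteratedDeriv n (fun t => Real.exp (stableLogCGF √ν θ τ t)) 0 := by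
  have hXm := hX.1
  have hint : Integrable (fun ω => Real.exp (-(1 / 2) * Real.log |X ω|)) :=
    .of_integral_ne_zero <| (hX.mgf_log_abs (by norm_num)).trans_ne (Real.exp_ne_zero _)
  refine integral_pow_eq_iteratedDeriv_of_mgf_eqOn_Ioo (by norm_num) hint (hX.2.2.2.2.1 n)
    (by fun_prop) (analyticAt_stableLogCGF hX.abs_le_one).rexp fun t ht => hX.mgf_log_abs ?_
  exact Ioo_subset_Ioo_left (by norm_num) ht

theorem integral_log_abs_pow_succ (hX : IsStrictlyStable X ν θ τ) (n : ℕ) :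
    ∫ ω, Real.log |X ω| ^ (n + 1) = ∑ i ∈ Finset.range (n + 1),
      n.choose i * stableLogCumulant √ν θ τ (i + 1) * ∫ ω, Real.log |X ω| ^ (n - i) := by
  simp only [hX.integral_log_abs_pow, iteratedDeriv_exp_comp_succ
    (analyticAt_stableLogCGF hX.abs_le_one), iteratedDeriv_stableLogCGF_zero hX.abs_le_one]

end IsStrictlyStable

theorem sixth_log_moment_of_strictlyStable {Ω : Type*} [MeasureSpace Ω]
    [IsProbabilityMeasure (ℙ : Measure Ω)] (X : Ω → ℝ) (ν θ τ : ℝ)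
    (hX : IsStrictlyStable X ν θ τ)
    (DV : ℝ) (hDV : DV = Real.pi ^ 2 / 4 * (1 - θ ^ 2) + Real.pi ^ 2 / 6 * (ν - 1)) :
    (∫ ω, (Real.log |X ω|) ^ 6) =
      τ ^ 6 + 15 * τ ^ 4 * DV + 40 * τ ^ 3 * zetaR 3 * (ν ^ ((3 : ℝ) / 2) - 1)
        + 45 * τ ^ 2 * DV ^ 2 + 15 * DV ^ 3
        + 15 * τ ^ 2 * Real.pi ^ 4 * ((1 - θ ^ 4) / 8 + (ν ^ 2 - 1) / 15)
        + 120 * τ * zetaR 3 * (ν ^ ((3 : ℝ) / 2) - 1) * DV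
        + 40 * zetaR 3 ^ 2 * (ν ^ ((3 : ℝ) / 2) - 1) ^ 2
        + 144 * τ * zetaR 5 * (ν ^ ((5 : ℝ) / 2) - 1)
        + 15 * Real.pi ^ 4 * ((1 - θ ^ 4) / 8 + (ν ^ 2 - 1) / 15) * DV
        + 8 * Real.pi ^ 6 * ((1 - θ ^ 6) / 32 + (ν ^ 3 - 1) / 63) := by
  have hν : 0 ≤ ν := by linarith [hX.2.1]
  have h2 (n : ℕ) : √ν ^ (2 * n) = ν ^ n := by rw [pow_mul, Real.sq_sqrt hν]
  have h3 : ν ^ ((3 : ℝ) / 2) = √ν ^ 3 := by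
    rw [Real.rpow_div_two_eq_sqrt _ hν, ← Real.rpow_natCast, Nat.cast_ofNat]
  have h5 : ν ^ ((5 : ℝ) / 2) = √ν ^ 5 := by
    rw [Real.rpow_div_two_eq_sqrt _ hν, ← Real.rpow_natCast, Nat.cast_ofNat]
  rw [sixth_moment_eq_of_recursion (m := fun n => ∫ ω, Real.log |X ω| ^ n) (by simp)
    hX.integral_log_abs_pow_succ, stableLogCumulant_two, stableLogCumulant_three,
    stableLogCumulant_four, stableLogCumulant_five, stableLogCumulant_six, h3, h5, hDV,
    show √ν ^ 4 = ν ^ 2 from h2 2, show √ν ^ 6 = ν ^ 3 from h2 3, Real.sq_sqrt hν,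
    stableLogCumulant]
  ring
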